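/- arXiv:1108.3244 — 2 statements merged into one kernel-verified Lean document; each statement's English description precedes it below -/
import Mathlib

section
/- Let E > 0 and r₀ > 0. For r ∈ (0, 1/(e·r₀)) set M(r) = log(1/(r₀·r)), L(r) = log(M(r)), and h(r) = 1 − E/L(r). Then the function r ↦ r·h(r) is twice differentiable on (0, 1/(e·r₀)) with (r·h(r))'' = −(E/(L(r)²·M(r)·r))·(1 + 1/M(r) + 2/(L(r)·M(r))). In particular, whenever additionally 0 < h(r) ≤ 1, one has (r·h(r))''/(r·h(r)) ≤ −E/(2·L(r)²·M(r)·r²). -/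
/-!
Since `M(r) = log (1 / (r₀ r))` satisfies `M' = -1/r`, every `g` gives
`(r g(M))' = g(M) - g'(M)` and `(r g(M))'' = (g''(M) - g'(M)) / r`. For `g(m) = 1 - E / log m`
this is the asserted formula, and the bound on the quotient follows because the factor
`1 + 1/M + 2/(L M)` exceeds `1`, whereas `h / 2 < 1`.
-/

open Filter Topology

section LogarithmicVariable

variable {c x : ℝ}

lemma lt_log_one_div_mul_iff (hc : 0 < c) (hx : 0 < x) (a : ℝ) :
    a < Real.log (1 / (c * x)) ↔ x < 1 / (Real.exp a * c) := by
  rw [Real.lt_log_iff_exp_lt (by positivity), lt_div_iff₀ (by positivity),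
    lt_div_iff₀ (by positivity)]
  ring_nf

lemma hasDerivAt_log_one_div_mul (hc : c ≠ 0) (hx : x ≠ 0) :
    HasDerivAt (fun y => Real.log (1 / (c * y))) (-(1 / x)) x := by
  have hlog : HasDerivAt (fun y => -Real.log (c * y)) (-(c * 1 / (c * x))) x :=
    (((hasDerivAt_id' x).const_mul c).log (mul_ne_zero hc hx)).fun_neg
  simpa only [one_div, Real.log_inv, mul_div_mul_left _ _ hc] using hlog

lemma hasDerivAt_comp_log_one_div_mul {g : ℝ → ℝ} {g' : ℝ} (hc : c ≠ 0) (hx : x ≠ 0)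
    (hg : HasDerivAt g g' (Real.log (1 / (c * x)))) :
    HasDerivAt (fun y => g (Real.log (1 / (c * y)))) (-(g' / x)) x :=
  (hg.comp x (hasDerivAt_log_one_div_mul hc hx)).congr_deriv (by ring)

lemma hasDerivAt_mul_comp_log_one_div_mul {g : ℝ → ℝ} {g' : ℝ} (hc : c ≠ 0) (hx : x ≠ 0)
    (hg : HasDerivAt g g' (Real.log (1 / (c * x)))) :
    HasDerivAt (fun y => y * g (Real.log (1 / (c * y))))
      (g (Real.log (1 / (c * x))) - g') x :=
  ((hasDerivAt_id' x).fun_mul (hasDerivAt_comp_log_one_div_mul hc hx hg)).congr_deriv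
    (by rw [one_mul, mul_neg, mul_div_cancel₀ _ hx, sub_eq_add_neg])

lemma hasDerivAt_deriv_mul_comp_log_one_div_mul {g g' : ℝ → ℝ} {g'' : ℝ}
    (hc : c ≠ 0) (hx : x ≠ 0)
    (hg : ∀ᶠ m in 𝓝 (Real.log (1 / (c * x))), HasDerivAt g (g' m) m)
    (hg' : HasDerivAt g' g'' (Real.log (1 / (c * x)))) :
    HasDerivAt (deriv fun y => y * g (Real.log (1 / (c * y))))
      ((g'' - g' (Real.log (1 / (c * x)))) / x) x := by
  have hderiv : deriv (fun y => y * g (Real.log (1 / (c * y)))) =ᶠ[𝓝 x]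
      fun y => g (Real.log (1 / (c * y))) - g' (Real.log (1 / (c * y))) := by
    have hcont := (hasDerivAt_log_one_div_mul hc hx).continuousAt
    filter_upwards [hcont.eventually hg, eventually_ne_nhds hx] with y hgy hy
    exact (hasDerivAt_mul_comp_log_one_div_mul hc hy hgy).deriv
  have hsub := (hasDerivAt_comp_log_one_div_mul hc hx hg.self_of_nhds).fun_sub
    (hasDerivAt_comp_log_one_div_mul hc hx hg')
  exact (hsub.congr_of_eventuallyEq hderiv).congr_deriv (by ring)

end LogarithmicVariable

section OneSubDivLog

variable (E : ℝ) {m : ℝ}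

lemma hasDerivAt_one_sub_div_log (hm : Real.log m ≠ 0) :
    HasDerivAt (fun y => 1 - E / Real.log y) (E / (m * Real.log m ^ 2)) m := by
  have hm₀ : m ≠ 0 := (Real.log_ne_zero.mp hm).1
  refine (((hasDerivAt_const m E).fun_div (Real.hasDerivAt_log hm₀) hm).const_sub 1).congr_deriv ?_
  field_simp
  ring

lemma hasDerivAt_div_mul_log_sq (hm : Real.log m ≠ 0) :
    HasDerivAt (fun y => E / (y * Real.log y ^ 2))
      (-(E / (m ^ 2 * Real.log m ^ 2)) * (1 + 2 / Real.log m)) m := by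
  have hm₀ : m ≠ 0 := (Real.log_ne_zero.mp hm).1
  have hdenom : HasDerivAt (fun y => y * Real.log y ^ 2)
      (Real.log m ^ 2 + 2 * Real.log m) m := by
    refine ((hasDerivAt_id' m).fun_mul ((Real.hasDerivAt_log hm₀).fun_pow 2)).congr_deriv ?_
    field_simp
    ring
  refine ((hasDerivAt_const m E).fun_div hdenom
    (mul_ne_zero hm₀ (pow_ne_zero 2 hm))).congr_deriv ?_
  field_simp
  ring

lemma eventually_hasDerivAt_one_sub_div_log (hm : Real.log m ≠ 0) :
    ∀ᶠ y in 𝓝 m, HasDerivAt (fun z => 1 - E / Real.log z) (E / (y * Real.log y ^ 2)) y := by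
  have hm₀ : m ≠ 0 := (Real.log_ne_zero.mp hm).1
  filter_upwards [(Real.continuousAt_log hm₀).eventually_ne hm] with y hy
  exact hasDerivAt_one_sub_div_log E hy

end OneSubDivLog

lemma neg_mul_div_mul_le_of_le_two {E M L r h : ℝ} (hE : 0 ≤ E) (hM : 0 < M) (hL : 0 < L)
    (hr : 0 < r) (hh : 0 < h) (hh₂ : h ≤ 2) :
    -(E / (L ^ 2 * M * r)) * (1 + 1 / M + 2 / (L * M)) / (r * h) ≤
      -E / (2 * L ^ 2 * M * r ^ 2) := by
  have hfactor : h / 2 ≤ 1 + 1 / M + 2 / (L * M) := by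
    have : 0 < 1 / M + 2 / (L * M) := by positivity
    linarith
  rw [div_le_iff₀ (by positivity)]
  calc -(E / (L ^ 2 * M * r)) * (1 + 1 / M + 2 / (L * M))
      ≤ -(E / (L ^ 2 * M * r)) * (h / 2) :=
        mul_le_mul_of_nonpos_left hfactor (neg_nonpos.mpr (by positivity))
    _ = -E / (2 * L ^ 2 * M * r ^ 2) * (r * h) := by field_simp

theorem stmt_9_general (E r₀ : ℝ) (M L h : ℝ → ℝ)
    (hM : ∀ r, M r = Real.log (1 / (r₀ * r)))
    (hL : ∀ r, L r = Real.log (M r))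
    (hh : ∀ r, h r = 1 - E / L r) :
    ∀ r ∈ Set.Ioo (0 : ℝ) (1 / r₀), L r ≠ 0 →
      DifferentiableAt ℝ (fun x => x * h x) r ∧
        DifferentiableAt ℝ (deriv (fun x => x * h x)) r ∧
        deriv (deriv (fun x => x * h x)) r =
          -(E / ((L r) ^ 2 * M r * r)) * (1 + 1 / M r + 2 / (L r * M r)) ∧
        (0 ≤ E → 0 < L r → 0 < h r →
          deriv (deriv (fun x => x * h x)) r / (r * h r) ≤
            -E / (2 * (L r) ^ 2 * M r * r ^ 2)) := by
  rintro r ⟨hr, hr_lt⟩ hLr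
  have hr₀ : 0 < r₀ := one_div_pos.mp (hr.trans hr_lt)
  have hMr : 0 < M r :=
    (hM r).symm ▸ (lt_log_one_div_mul_iff hr₀ hr 0).mpr (by rwa [Real.exp_zero, one_mul])
  have hlog : Real.log (Real.log (1 / (r₀ * r))) ≠ 0 := by rwa [← hM, ← hL]
  have hfun : (fun x => x * h x) = fun x => x * (1 - E / Real.log (Real.log (1 / (r₀ * x)))) := by
    simp only [hh, hL, hM]
  have hfirst : DifferentiableAt ℝ (fun x => x * h x) r :=
    hfun ▸ (hasDerivAt_mul_comp_log_one_div_mul hr₀.ne' hr.ne'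
      (hasDerivAt_one_sub_div_log E hlog)).differentiableAt
  have hsecond : HasDerivAt (deriv fun x => x * h x)
      (-(E / ((L r) ^ 2 * M r * r)) * (1 + 1 / M r + 2 / (L r * M r))) r := by
    rw [hfun]
    refine (hasDerivAt_deriv_mul_comp_log_one_div_mul hr₀.ne' hr.ne'
      (eventually_hasDerivAt_one_sub_div_log E hlog)
      (hasDerivAt_div_mul_log_sq E hlog)).congr_deriv ?_
    rw [← hM r, ← hL r]
    field_simp
    ring
  refine ⟨hfirst, hsecond.differentiableAt, hsecond.deriv, fun hE hLpos hhr => ?_⟩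
  have hh_le : h r ≤ 1 := hh r ▸ sub_le_self 1 (div_nonneg hE hLpos.le)
  rw [hsecond.deriv]
  exact neg_mul_div_mul_le_of_le_two hE hMr hLpos hr hhr (hh_le.trans one_le_two)

/-- With `M(r) = log(1/(r₀ r))`, `L(r) = log(M(r))` and `h(r) = 1 − E / L(r)`: on
`(0, 1/(e r₀))` the function `r ↦ r h(r)` is twice differentiable with
`(r h(r))'' = −(E/(L(r)² M(r) r)) (1 + 1/M(r) + 2/(L(r) M(r)))`, and whenever
`0 < h(r) ≤ 1` one has `(r h(r))''/(r h(r)) ≤ −E/(2 L(r)² M(r) r²)`. -/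
theorem stmt_9 (E r₀ : ℝ) (hE : 0 < E) (hr₀ : 0 < r₀)
    (M L h : ℝ → ℝ)
    (hM : ∀ r, M r = Real.log (1 / (r₀ * r)))
    (hL : ∀ r, L r = Real.log (M r))
    (hh : ∀ r, h r = 1 - E / L r) :
    ∀ r ∈ Set.Ioo (0 : ℝ) (1 / (Real.exp 1 * r₀)),
      DifferentiableAt ℝ (fun x => x * h x) r ∧
        DifferentiableAt ℝ (deriv (fun x => x * h x)) r ∧
        deriv (deriv (fun x => x * h x)) r =
          -(E / ((L r) ^ 2 * M r * r)) * (1 + 1 / M r + 2 / (L r * M r)) ∧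
        (0 < h r → h r ≤ 1 →
          deriv (deriv (fun x => x * h x)) r / (r * h r) ≤
            -E / (2 * (L r) ^ 2 * M r * r ^ 2)) := by
  rintro r ⟨hr, hr_lt⟩
  have hMr : 1 < M r := (hM r).symm ▸ (lt_log_one_div_mul_iff hr₀ hr 1).mpr hr_lt
  have hLr : 0 < L r := (hL r).symm ▸ Real.log_pos hMr
  have hr_lt' : r < 1 / r₀ := hr_lt.trans (one_div_lt_one_div_of_lt hr₀
    (lt_mul_of_one_lt_left hr₀ (Real.one_lt_exp_iff.mpr one_pos)))
  obtain ⟨hdiff, hdiff', hformula, hbound⟩ :=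
    stmt_9_general E r₀ M L h hM hL hh r ⟨hr, hr_lt'⟩ hLr.ne'
  exact ⟨hdiff, hdiff', hformula, fun hhr _ => hbound hE.le hLr hhr⟩
end

section
/- Let D, F, E, L, M be positive real numbers satisfying E ≥ D·F, M ≥ 2, and M ≥ 2·L·D·F/E. Then for every δ ∈ [0,1], E·δ²/(L·M) − D·F·δ·√(1−δ²)/M + E·(1−δ²) ≥ 0. -/
/-!
The expression is the quadratic form `a x² - b x y + c y²` with `a = E / (L M)`, `b = D F / M`,
`c = E`, evaluated at `x = δ`, `y = √(1 - δ²)`. Instead of splitting according to whether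
`√(1 - δ²) ≥ 1 / M`, one checks `b² ≤ 4 a c`, that is, `L (D F)² ≤ 4 M E²`.
-/

theorem binaryQuadratic_nonneg_of_sq_le_four_mul {R : Type*} [CommRing R] [LinearOrder R]
    [IsStrictOrderedRing R] {a b c : R} (ha : 0 ≤ a) (hc : 0 ≤ c) (h : b ^ 2 ≤ 4 * a * c)
    (x y : R) : 0 ≤ a * x ^ 2 - b * x * y + c * y ^ 2 := by
  have hsq : (b * x * y) ^ 2 ≤ (a * x ^ 2 + c * y ^ 2) ^ 2 :=
    calc (b * x * y) ^ 2 = b ^ 2 * (x * y) ^ 2 := by ring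
      _ ≤ 4 * a * c * (x * y) ^ 2 := by gcongr
      _ = 4 * (a * x ^ 2) * (c * y ^ 2) := by ring
      _ ≤ (a * x ^ 2 + c * y ^ 2) ^ 2 := four_mul_le_sq_add _ _
  have hcross : b * x * y ≤ a * x ^ 2 + c * y ^ 2 := le_of_sq_le_sq hsq (by positivity)
  linarith

theorem mul_sq_le_mul_sq_of_mul_le_mul {R : Type*} [CommSemiring R] [PartialOrder R]
    [IsOrderedRing R] {k K x y : R} (hK : 0 ≤ K) (hx : 0 ≤ x) (hxy : x ≤ y)
    (h : k * x ≤ K * y) : k * x ^ 2 ≤ K * y ^ 2 := by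
  simpa only [pow_two, mul_assoc] using
    mul_le_mul h hxy hx (mul_nonneg hK (hx.trans hxy))

theorem stmt_10_general {D F E L M : ℝ} (hE : 0 ≤ E) (hL : 0 < L) (hM : 0 < M)
    (h : L * (D * F) ^ 2 ≤ 4 * M * E ^ 2) :
    ∀ δ ∈ Set.Icc (-1 : ℝ) 1,
      0 ≤ E * δ ^ 2 / (L * M) - D * F * δ * Real.sqrt (1 - δ ^ 2) / M
        + E * (1 - δ ^ 2) := by
  rintro δ ⟨hδ_ge, hδ_le⟩
  have hsqrt : Real.sqrt (1 - δ ^ 2) ^ 2 = 1 - δ ^ 2 :=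
    Real.sq_sqrt (sub_nonneg.2 ((sq_le_one_iff_abs_le_one δ).2 (abs_le.2 ⟨hδ_ge, hδ_le⟩)))
  have hdiscrim : (D * F / M) ^ 2 ≤ 4 * (E / (L * M)) * E :=
    calc (D * F / M) ^ 2 = L * (D * F) ^ 2 / (L * M ^ 2) := by field_simp
      _ ≤ 4 * M * E ^ 2 / (L * M ^ 2) := by gcongr
      _ = 4 * (E / (L * M)) * E := by field_simp
  calc 0 ≤ E / (L * M) * δ ^ 2 - D * F / M * δ * Real.sqrt (1 - δ ^ 2)
        + E * Real.sqrt (1 - δ ^ 2) ^ 2 :=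
      binaryQuadratic_nonneg_of_sq_le_four_mul (by positivity) hE hdiscrim _ _
    _ = E * δ ^ 2 / (L * M) - D * F * δ * Real.sqrt (1 - δ ^ 2) / M + E * (1 - δ ^ 2) := by
      rw [hsqrt]; ring

/-- Key algebraic inequality: if `E ≥ D F`, `M ≥ 2` and `M ≥ 2 L D F / E`, then for every
`δ ∈ [0,1]`, `E δ²/(L M) − D F δ √(1−δ²)/M + E (1−δ²) ≥ 0`. -/
theorem stmt_10 (D F E L M : ℝ) (hD : 0 < D) (hF : 0 < F) (hE : 0 < E)
    (hL : 0 < L) (hM : 0 < M)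
    (h1 : D * F ≤ E) (h2 : 2 ≤ M) (h3 : 2 * L * D * F / E ≤ M) :
    ∀ δ ∈ Set.Icc (0 : ℝ) 1,
      0 ≤ E * δ ^ 2 / (L * M) - D * F * δ * Real.sqrt (1 - δ ^ 2) / M
        + E * (1 - δ ^ 2) := by
  have hLDF : L * (D * F) ≤ 4 * M * E := by linarith [(div_le_iff₀ hE).1 h3, mul_pos hM hE]
  exact fun δ hδ ↦ stmt_10_general hE.le hL hM (mul_sq_le_mul_sq_of_mul_le_mul (by positivity)
    (by positivity) h1 hLDF) δ (Set.Icc_subset_Icc_left (by norm_num) hδ)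
end
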